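/- arXiv:0809.0105 — 9 statements merged into one kernel-verified Lean document; each statement's English description precedes it below -/
import Mathlib

section
/- Let A be a set of elements of a type α such that every injective map from A to A is surjective (i.e., A is tame), and let b be an element not in A. Then every injective map from A ∪ {b} to A ∪ {b} is surjective; that is, A ∪ {b} is also tame. -/
/-! An injective self-map `g` of `X ∪ {∞}` becomes, after swapping `g ∞` and `∞` in the codomain,
one that fixes `∞`. By injectivity it then preserves `X`, so tameness of `X` applies to the
restriction; undoing the swap does not affect surjectivity. -/

section

variable {X Y : Type*}

/-- Tameness of a type: every injective self-map is surjective. A set is tame when its subtype is;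
working with types lets adjoining a point be modelled by `Option`. -/
def IsTame (X : Type*) : Prop :=
  ∀ g : X → X, Function.Injective g → Function.Surjective g

theorem IsTame.of_equiv (hX : IsTame X) (e : X ≃ Y) : IsTame Y := by
  intro g hg
  have conj_injective : Function.Injective (e.symm ∘ g ∘ e) :=
    e.symm.injective.comp (hg.comp e.injective)
  have conj_surjective : Function.Surjective (e.symm ∘ g ∘ e) := hX _ conj_injective
  exact (e.surjective_comp g).mp ((e.symm.comp_surjective (g ∘ e)).mp conj_surjective)

theorem exists_optionMap_eq_of_eq_none_iff {h : Option X → Option Y}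
    (h_none : ∀ x, h x = none ↔ x = none) : ∃ f : X → Y, Option.map f = h := by
  have h_some (x : X) : ∃ y, some y = h (some x) :=
    Option.ne_none_iff_exists.mp (mt (h_none (some x)).mp (Option.some_ne_none x))
  choose f hf using h_some
  refine ⟨f, funext ?_⟩
  rintro (_ | x)
  · exact ((h_none none).mpr rfl).symm
  · exact hf x

theorem IsTame.surjective_of_map_none (hX : IsTame X) {h : Option X → Option X}
    (h_inj : Function.Injective h) (h_none : h none = none) : Function.Surjective h := by
  have h_eq_none (x : Option X) : h x = none ↔ x = none := h_inj.eq_iff' h_none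
  obtain ⟨f, rfl⟩ := exists_optionMap_eq_of_eq_none_iff h_eq_none
  have f_inj : Function.Injective f :=
    Function.Injective.of_comp (f := some) (h_inj.comp (Option.some_injective X))
  rintro (_ | y)
  · exact ⟨none, rfl⟩
  · obtain ⟨x, rfl⟩ := hX f f_inj y
    exact ⟨some x, rfl⟩

theorem IsTame.option (hX : IsTame X) : IsTame (Option X) := by
  classical
  intro g hg
  let e : Equiv.Perm (Option X) := Equiv.swap (g none) none
  have e_comp_surjective : Function.Surjective (e ∘ g) :=
    hX.surjective_of_map_none (e.injective.comp hg) (Equiv.swap_apply_left _ _)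
  exact (e.comp_surjective g).mp e_comp_surjective

end

/-- A set `A` is *tame* if every injective map from `A` to itself is surjective.
If `A` is tame and `b ∉ A`, then `A ∪ {b}` is tame. -/
theorem tame_insert {α : Type*} (A : Set α)
    (hA : ∀ g : A → A, Function.Injective g → Function.Surjective g)
    (b : α) (hb : b ∉ A) :
    ∀ g : (A ∪ {b} : Set α) → (A ∪ {b} : Set α),
      Function.Injective g → Function.Surjective g := by
  classical
  rw [Set.union_singleton]
  let insertEquiv : Option A ≃ (insert b A : Set α) :=
    (Equiv.optionEquivSumPUnit A).trans (Equiv.Set.insert hb).symm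
  exact (IsTame.option hA).of_equiv insertEquiv
end

section
/- Let (X, f, x₀) be a counting system and # the unique iterator for (X, f, x₀) on a type α. If A and B are finite sets (A, B : Finset α) and there exists a bijection between A and B, then #(A) = #(B). -/
/-- The function `it` is the iterator on `α` for the counting system `(X, f, x₀)`. The counting
system is unbundled: `X` is the codomain of `it`, while `f` and `x₀` are parameters. -/
structure IsIterator {X α : Type*} [DecidableEq α] (f : X → X) (x₀ : X) (it : Finset α → X) :
    Prop where
  map_empty : it ∅ = x₀
  map_insert : ∀ (A : Finset α) (a : α), a ∉ A → it (insert a A) = f (it A)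

theorem IsIterator.eq_iterate_card {X α : Type*} [DecidableEq α] {f : X → X} {x₀ : X}
    {it : Finset α → X} (hit : IsIterator f x₀ it) (A : Finset α) : it A = f^[A.card] x₀ := by
  induction A using Finset.induction_on with
  | empty => rw [hit.map_empty, Finset.card_empty, Function.iterate_zero_apply]
  | insert a A ha ih =>
    rw [hit.map_insert A a ha, ih, Finset.card_insert_of_notMem ha, Function.iterate_succ_apply']

theorem iterator_eq_of_equiv_general {X α β : Type*} [DecidableEq α] [DecidableEq β]
    {f : X → X} {x₀ : X} {it : Finset α → X} {it' : Finset β → X}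
    (hit : IsIterator f x₀ it) (hit' : IsIterator f x₀ it')
    {A : Finset α} {B : Finset β} (h : Nonempty (A ≃ B)) : it A = it' B := by
  obtain ⟨e⟩ := h
  calc
    it A = f^[A.card] x₀ := hit.eq_iterate_card A
    _ = f^[B.card] x₀ := by rw [Finset.card_eq_of_equiv e]
    _ = it' B := (hit'.eq_iterate_card B).symm

/-- If `it` is the iterator for a counting system `(X, f, x₀)` on `α`, and `A`, `B` are
finite sets with a bijection between them, then `it A = it B`. -/
theorem iterator_eq_of_equiv {X : Type*} (f : X → X) (x₀ : X)
    {α : Type*} [DecidableEq α] (it : Finset α → X)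
    (h0 : it ∅ = x₀)
    (h1 : ∀ (A : Finset α) (a : α), a ∉ A → it (insert a A) = f (it A))
    (A B : Finset α) (h : Nonempty (A ≃ B)) : it A = it B :=
  have hit : IsIterator f x₀ it := ⟨h0, h1⟩
  iterator_eq_of_equiv_general hit hit h
end

section
/- Let (X, f, x₀) be a standard counting system (f injective and x₀ not in the range of f) and # the unique iterator for (X, f, x₀) on a type α. Then # is complete: for all finite sets A, B : Finset α with #(B) = #(A), there exists a bijection between A and B. -/
/-!
An iterator only sees cardinality: its value at `A` is `f^[A.card] x₀`. It is therefore complete as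
soon as the orbit of `x₀` never repeats. For injective `f` a repetition in the orbit cancels down to
`f^[k] x₀ = x₀` with `0 < k`, which would put `x₀` in the range of `f`.
-/

open Function

theorem injective_iterate_apply_of_notMem_periodicPts {X : Type*} {f : X → X} {x : X}
    (hf : Injective f) (hx : x ∉ periodicPts f) : Injective fun n : ℕ => f^[n] x := by
  refine .of_lt_imp_ne fun m n hmn h => hx ?_
  have hper : IsPeriodicPt f (n - m) x := iterate_cancel hf h.symm
  exact mk_mem_periodicPts (Nat.sub_pos_of_lt hmn) hper

section Iterator

variable {X α : Type*} [DecidableEq α] {f : X → X} {it : Finset α → X}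

theorem iterator_eq_iterate_card
    (hinsert : ∀ (A : Finset α) (a : α), a ∉ A → it (insert a A) = f (it A)) (A : Finset α) :
    it A = f^[A.card] (it ∅) := by
  induction A using Finset.induction_on with
  | empty => rfl
  | insert a A ha ih =>
    rw [hinsert A a ha, ih, Finset.card_insert_of_notMem ha, iterate_succ_apply']

theorem iterator_complete_of_standard_general {x₀ : X}
    (horbit : Injective fun n : ℕ => f^[n] x₀) (hempty : it ∅ = x₀)
    (hinsert : ∀ (A : Finset α) (a : α), a ∉ A → it (insert a A) = f (it A))
    (A B : Finset α) (h : it B = it A) : Nonempty (A ≃ B) := by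
  have hiterate (C : Finset α) : it C = f^[C.card] x₀ :=
    hempty ▸ iterator_eq_iterate_card hinsert C
  have hcard : A.card = B.card := horbit <| calc
    f^[A.card] x₀ = it A := (hiterate A).symm
    _ = it B := h.symm
    _ = f^[B.card] x₀ := hiterate B
  exact ⟨Finset.equivOfCardEq hcard⟩

end Iterator

/-- If the counting system `(X, f, x₀)` is standard (`f` injective and `x₀` not in the
range of `f`), then its unique iterator on `α` is complete: whenever `it B = it A`
there is a bijection between `A` and `B`. -/
theorem iterator_complete_of_standard {X : Type*} (f : X → X) (x₀ : X)
    (hinj : Function.Injective f) (hx₀ : x₀ ∉ Set.range f)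
    {α : Type*} [DecidableEq α] (it : Finset α → X)
    (h0 : it ∅ = x₀)
    (h1 : ∀ (A : Finset α) (a : α), a ∉ A → it (insert a A) = f (it A)) :
    ∀ A B : Finset α, it B = it A → Nonempty (A ≃ B) := by
  have hperiodic : x₀ ∉ periodicPts f := fun h => hx₀ (periodicPts_subset_range h)
  exact iterator_complete_of_standard_general
    (injective_iterate_apply_of_notMem_periodicPts hinj hperiodic) h0 h1
end

section
/- (Recursion theorem) If (X, f, x₀) is a Dedekind system, then for every counting system (Y, g, y₀) there exists a unique mapping h : X → Y with h(x₀) = y₀ such that h ∘ f = g ∘ h. -/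
/-!
The graph of `h` is the smallest relation containing `(x₀, y₀)` and closed under
`(x, y) ↦ (f x, g y)`. Standardness makes its pairs readable backwards: a pair over `x₀` can only
be `(x₀, y₀)`, and a pair over `f x` can only come from a pair over `x`. Hence being related to
exactly one `y` is a property of `x₀` inherited along `f`, and minimality spreads it to all of `X`.
Uniqueness of `h` is minimality applied to the set where two solutions agree.
-/

open Function

section

variable {X Y : Type*} {f : X → X} {x₀ : X} {g : Y → Y} {y₀ : Y}

/-- Minimality of the counting system `(X, f, x₀)`: no proper `f`-invariant subset contains `x₀`.
Invariance of `S` is encoded as `Set.MapsTo f S S`. -/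
def IsMinimalSystem (f : X → X) (x₀ : X) : Prop :=
  ∀ S : Set X, x₀ ∈ S → Set.MapsTo f S S → S = Set.univ

/-- Standardness of the counting system `(X, f, x₀)`: the Peano axioms other than induction, which
is `IsMinimalSystem`. -/
structure IsStandardSystem (f : X → X) (x₀ : X) : Prop where
  injective : Injective f
  notMem_range : x₀ ∉ Set.range f

namespace IsMinimalSystem

theorem induction (hmin : IsMinimalSystem f x₀) {p : X → Prop} (base : p x₀)
    (step : ∀ x, p x → p (f x)) (x : X) : p x :=
  Set.eq_univ_iff_forall.mp (hmin {x | p x} base step) x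

theorem eq_of_semiconj (hmin : IsMinimalSystem f x₀) {h k : X → Y} (h₀ : h x₀ = k x₀)
    (hh : Semiconj h f g) (hk : Semiconj k f g) : h = k := by
  refine funext (hmin.induction h₀ fun x hx => ?_)
  calc h (f x) = g (h x) := hh x
    _ = g (k x) := congrArg g hx
    _ = k (f x) := (hk x).symm

end IsMinimalSystem

/-- The smallest relation between `X` and `Y` containing `(x₀, y₀)` and closed under
`(x, y) ↦ (f x, g y)`; it serves as the graph of the map defined by recursion from `g` and `y₀`. -/
inductive RecursionGraph (f : X → X) (x₀ : X) (g : Y → Y) (y₀ : Y) : X → Y → Prop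
  | base : RecursionGraph f x₀ g y₀ x₀ y₀
  | step {x : X} {y : Y} : RecursionGraph f x₀ g y₀ x y → RecursionGraph f x₀ g y₀ (f x) (g y)

namespace RecursionGraph

theorem eq_of_base (hx₀ : x₀ ∉ Set.range f) {y : Y} (h : RecursionGraph f x₀ g y₀ x₀ y) :
    y = y₀ := by
  cases h with
  | base => rfl
  | step => exact absurd (Set.mem_range_self _) hx₀

theorem exists_eq_of_step (hstd : IsStandardSystem f x₀) {x : X} {z : Y}
    (h : RecursionGraph f x₀ g y₀ (f x) z) : ∃ y, RecursionGraph f x₀ g y₀ x y ∧ z = g y := by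
  generalize hx : f x = x' at h
  cases h with
  | base => exact absurd ⟨x, hx⟩ hstd.notMem_range
  | step h =>
    obtain rfl := hstd.injective hx
    exact ⟨_, h, rfl⟩

theorem existsUnique (hmin : IsMinimalSystem f x₀) (hstd : IsStandardSystem f x₀) (g : Y → Y)
    (y₀ : Y) (x : X) : ∃! y, RecursionGraph f x₀ g y₀ x y := by
  induction x using hmin.induction with
  | base => exact ⟨y₀, base, fun _ => eq_of_base hstd.notMem_range⟩
  | step x ih =>
    obtain ⟨y, hy, y_unique⟩ := ih
    refine ⟨g y, step hy, fun z hz => ?_⟩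
    obtain ⟨y', hy', rfl⟩ := exists_eq_of_step hstd hz
    exact congrArg g (y_unique y' hy')

end RecursionGraph

theorem IsMinimalSystem.exists_semiconj (hmin : IsMinimalSystem f x₀)
    (hstd : IsStandardSystem f x₀) (g : Y → Y) (y₀ : Y) :
    ∃ h : X → Y, h x₀ = y₀ ∧ Semiconj h f g := by
  choose h h_graph h_unique using RecursionGraph.existsUnique hmin hstd g y₀
  exact ⟨h, (h_unique x₀ y₀ .base).symm, fun x => (h_unique (f x) _ (.step (h_graph x))).symm⟩

end

/-- Recursion theorem: if `(X, f, x₀)` is a Dedekind system (minimal and standard),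
then for every counting system `(Y, g, y₀)` there exists a unique map `h : X → Y` with
`h x₀ = y₀` and `h ∘ f = g ∘ h`. -/
theorem recursion_theorem {X : Type*} (f : X → X) (x₀ : X)
    (hmin : ∀ S : Set X, x₀ ∈ S → (∀ x ∈ S, f x ∈ S) → S = Set.univ)
    (hinj : Function.Injective f) (hx₀ : x₀ ∉ Set.range f)
    {Y : Type*} (g : Y → Y) (y₀ : Y) :
    ∃! h : X → Y, h x₀ = y₀ ∧ h ∘ f = g ∘ h := by
  have hmin' : IsMinimalSystem f x₀ := hmin
  simp only [← semiconj_iff_comp_eq]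
  obtain ⟨h, h_base, h_semiconj⟩ := hmin'.exists_semiconj ⟨hinj, hx₀⟩ g y₀
  refine ⟨h, ⟨h_base, h_semiconj⟩, ?_⟩
  rintro k ⟨k_base, k_semiconj⟩
  exact hmin'.eq_of_semiconj (k_base.trans h_base.symm) k_semiconj h_semiconj
end

section
/- Let (X, f, x₀) be a Dedekind system. Then there exists a unique mapping F : X → Finset X with F(x₀) = ∅ and F(f(x)) = F(x) ∪ {x} for all x ∈ X. Moreover, x ∉ F(x) for every x ∈ X, and if # is the unique iterator for (X, f, x₀) on X itself, then for every finite set A : Finset X there is a bijection between A and F(#(A)). -/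
/-!
The orbit map `n ↦ f^[n] x₀` identifies a Dedekind system with `ℕ`, so functions on `X` can be
defined by primitive recursion; `F` is one of them.

For `x ∉ F x`, the point is that `F x` is closed under predecessors: `f y ∈ F x` implies
`y ∈ F x`. Hence `f x ∈ F (f x) = insert x (F x)` would force `x ∈ F x`, and minimality gives the
claim by induction. Consequently `F (f x)` has exactly one element more than `F x`, and the
cardinality of `F (it A)` grows in step with that of `A`.
-/

section

variable {X β : Type*} {f : X → X} {x₀ : X}

/-- Minimality of the counting system `(X, f, x₀)`, i.e. the induction principle for it. -/
def IsMinimalCountingSystem (f : X → X) (x₀ : X) : Prop :=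
  ∀ S : Set X, x₀ ∈ S → (∀ x ∈ S, f x ∈ S) → S = Set.univ

/-- `(X, f, x₀)` is a Dedekind system: a counting system that is minimal and standard. -/
structure IsDedekindSystem (f : X → X) (x₀ : X) : Prop where
  minimal : IsMinimalCountingSystem f x₀
  injective : Function.Injective f
  notMem_range : x₀ ∉ Set.range f

/-- `it` is an iterator for `(X, f, x₀)` on `α`: it counts finite subsets of `α` in `X`. -/
def IsIterator_s8 {α : Type*} [DecidableEq α] (f : X → X) (x₀ : X) (it : Finset α → X) : Prop :=
  it ∅ = x₀ ∧ ∀ (A : Finset α) (a : α), a ∉ A → it (insert a A) = f (it A)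

/-- `F` satisfies the recursion that makes `F x` the set of elements counted before `x`. -/
def IsInitialSegmentMap [DecidableEq X] (f : X → X) (x₀ : X) (F : X → Finset X) : Prop :=
  F x₀ = ∅ ∧ ∀ x : X, F (f x) = insert x (F x)

namespace IsMinimalCountingSystem

theorem induction (h : IsMinimalCountingSystem f x₀) {P : X → Prop} (base : P x₀)
    (step : ∀ x, P x → P (f x)) (x : X) : P x :=
  Set.eq_univ_iff_forall.mp (h {x | P x} base step) x

theorem iterate_surjective (h : IsMinimalCountingSystem f x₀) :
    Function.Surjective fun n : ℕ => f^[n] x₀ :=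
  h.induction ⟨0, rfl⟩ fun _ ⟨n, hn⟩ =>
    ⟨n + 1, (Function.iterate_succ_apply' f n x₀).trans (congrArg f hn)⟩

theorem recursion_unique (h : IsMinimalCountingSystem f x₀) {g : X → β → β} {F G : X → β}
    (base : F x₀ = G x₀) (hF : ∀ x, F (f x) = g x (F x)) (hG : ∀ x, G (f x) = g x (G x)) :
    F = G :=
  funext <| h.induction base fun x hx => by rw [hF, hG, hx]

end IsMinimalCountingSystem

theorem iterate_injective_of_notMem_range (hf : Function.Injective f) (hx₀ : x₀ ∉ Set.range f) :
    Function.Injective fun n : ℕ => f^[n] x₀ := by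
  refine .of_lt_imp_ne fun m n hmn heq => hx₀ ?_
  have hcycle : f^[n - m] x₀ = x₀ := Function.iterate_cancel hf heq.symm
  obtain ⟨k, hk⟩ := Nat.exists_eq_add_one.mpr (Nat.sub_pos_of_lt hmn)
  rw [hk, Function.iterate_succ_apply'] at hcycle
  exact ⟨f^[k] x₀, hcycle⟩

namespace IsDedekindSystem

theorem iterate_bijective (h : IsDedekindSystem f x₀) :
    Function.Bijective fun n : ℕ => f^[n] x₀ :=
  ⟨iterate_injective_of_notMem_range h.injective h.notMem_range, h.minimal.iterate_surjective⟩

theorem exists_recursion (h : IsDedekindSystem f x₀) (b₀ : β) (g : X → β → β) :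
    ∃ F : X → β, F x₀ = b₀ ∧ ∀ x, F (f x) = g x (F x) := by
  let e : ℕ ≃ X := Equiv.ofBijective _ h.iterate_bijective
  have symm_base : e.symm x₀ = 0 := e.symm_apply_eq.mpr rfl
  have symm_step (x : X) : e.symm (f x) = e.symm x + 1 := by
    rw [e.symm_apply_eq]
    calc f x = f (e (e.symm x)) := by rw [e.apply_symm_apply]
      _ = e (e.symm x + 1) := (Function.iterate_succ_apply' f _ x₀).symm
  refine ⟨fun x => Nat.rec b₀ (fun n => g (e n)) (e.symm x), ?_, fun x => ?_⟩
  · simp [symm_base]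
  · simp only [symm_step, e.apply_symm_apply]

theorem existsUnique_recursion (h : IsDedekindSystem f x₀) (b₀ : β) (g : X → β → β) :
    ∃! F : X → β, F x₀ = b₀ ∧ ∀ x, F (f x) = g x (F x) := by
  obtain ⟨F, hF₀, hF⟩ := h.exists_recursion b₀ g
  exact ⟨F, ⟨hF₀, hF⟩, fun G ⟨hG₀, hG⟩ =>
    h.minimal.recursion_unique (hG₀.trans hF₀.symm) hG hF⟩

end IsDedekindSystem

namespace IsInitialSegmentMap

variable [DecidableEq X] {F : X → Finset X}

theorem mem_of_apply_mem (hF : IsInitialSegmentMap f x₀ F) (h : IsMinimalCountingSystem f x₀)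
    {x y : X} (hy : f y ∈ F x) : y ∈ F x := by
  obtain ⟨hF₀, hFs⟩ := hF
  induction x using h.induction with
  | base => simp [hF₀] at hy
  | step x ih =>
    rw [hFs, Finset.mem_insert] at hy ⊢
    rcases hy with rfl | hy
    · exact .inr (hFs y ▸ Finset.mem_insert_self y (F y))
    · exact .inr (ih hy)

theorem notMem_self (hF : IsInitialSegmentMap f x₀ F) (h : IsMinimalCountingSystem f x₀)
    (x : X) : x ∉ F x := by
  induction x using h.induction with
  | base => simp [hF.1]
  | step x ih =>
    intro hx
    have hmem : x ∈ F (f x) := hF.2 x ▸ Finset.mem_insert_self x (F x)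
    rcases Finset.mem_insert.mp (hF.2 x ▸ hx) with hfix | hx
    · exact ih (by rwa [hfix] at hmem)
    · exact ih (hF.mem_of_apply_mem h hx)

theorem card_apply_iterator {α : Type*} [DecidableEq α] (hF : IsInitialSegmentMap f x₀ F)
    (h : IsMinimalCountingSystem f x₀) {it : Finset α → X} (hit : IsIterator_s8 f x₀ it)
    (A : Finset α) : (F (it A)).card = A.card := by
  induction A using Finset.induction_on with
  | empty => rw [hit.1, hF.1, Finset.card_empty, Finset.card_empty]
  | insert a A ha ih =>
    rw [hit.2 A a ha, hF.2, Finset.card_insert_of_notMem (hF.notMem_self h _), ih,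
      Finset.card_insert_of_notMem ha]

end IsInitialSegmentMap

theorem dedekind_initial_segments_general [DecidableEq X] (α : Type*) [DecidableEq α]
    (h : IsDedekindSystem f x₀) :
    (∃! F : X → Finset X, IsInitialSegmentMap f x₀ F) ∧
      ∀ F : X → Finset X, IsInitialSegmentMap f x₀ F →
        (∀ x : X, x ∉ F x) ∧
        ∀ it : Finset α → X, IsIterator_s8 f x₀ it → ∀ A : Finset α, Nonempty (A ≃ F (it A)) :=
  ⟨h.existsUnique_recursion ∅ insert, fun _ hF =>
    ⟨hF.notMem_self h.minimal, fun _ hit A =>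
      ⟨Finset.equivOfCardEq (hF.card_apply_iterator h.minimal hit A).symm⟩⟩⟩

end

/-- Let `(X, f, x₀)` be a Dedekind system. There exists a unique map
`F : X → Finset X` with `F x₀ = ∅` and `F (f x) = F x ∪ {x}` for all `x`. Moreover
any such `F` satisfies `x ∉ F x` for all `x`, and if `it` is the unique iterator for
`(X, f, x₀)` on `X` itself, then every finite set `A : Finset X` is in bijection with
`F (it A)`. -/
theorem dedekind_initial_segments {X : Type*} [DecidableEq X] (f : X → X) (x₀ : X)
    (hmin : ∀ S : Set X, x₀ ∈ S → (∀ x ∈ S, f x ∈ S) → S = Set.univ)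
    (hinj : Function.Injective f) (hx₀ : x₀ ∉ Set.range f) :
    (∃! F : X → Finset X, F x₀ = ∅ ∧ ∀ x : X, F (f x) = insert x (F x)) ∧
      ∀ F : X → Finset X, (F x₀ = ∅ ∧ ∀ x : X, F (f x) = insert x (F x)) →
        (∀ x : X, x ∉ F x) ∧
        ∀ it : Finset X → X,
          (it ∅ = x₀ ∧ ∀ (A : Finset X) (a : X), a ∉ A → it (insert a A) = f (it A)) →
          ∀ A : Finset X, Nonempty (A ≃ F (it A)) :=
  dedekind_initial_segments_general X ⟨hmin, hinj, hx₀⟩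
end

section
/- (Lawvere) Let (X, f, x₀) be a counting system (with X in universe u) which is initial: for every type Y (in universe u), every g : Y → Y and every y₀ : Y there exists a unique mapping h : X → Y with h(x₀) = y₀ and h ∘ f = g ∘ h. Then (X, f, x₀) is a Dedekind system: it is minimal, f is injective, and x₀ is not in the range of f. -/
/-!
An initial counting system `(X, f, x₀)` has no endomorphism but the identity, so every morphism
`π : Y → X` from a counting system `Y` splits: `π ∘ h = id`, where `h : X → Y` is the morphism given
by initiality. Splitting the inclusion of an invariant subset containing `x₀` gives minimality.
Splitting `[x₀, f] : Option X → X` inverts it, as in Lambek's lemma, and the inverse is a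
predecessor map, with value `none` at `x₀` and `some x` at `f x`.
-/

universe u

open Set Function

/-- Morphisms `h : (X, f, x₀) → (Y, g, y₀)` of counting systems, which are kept unbundled: the
source and the target are given by their structure maps and base points. -/
def IsCountingHom {X Y : Type*} (f : X → X) (x₀ : X) (g : Y → Y) (y₀ : Y) (h : X → Y) : Prop :=
  h x₀ = y₀ ∧ h ∘ f = g ∘ h

/-- Initiality of the counting system `(X, f, x₀)` among the counting systems in the universe
of `X`. -/
def IsInitialCounting {X : Type u} (f : X → X) (x₀ : X) : Prop :=
  ∀ (Y : Type u) (g : Y → Y) (y₀ : Y), ∃! h : X → Y, IsCountingHom f x₀ g y₀ h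

namespace IsCountingHom

theorem id {X : Type*} (f : X → X) (x₀ : X) : IsCountingHom f x₀ f x₀ id :=
  ⟨rfl, rfl⟩

theorem comp {X Y Z : Type*} {f : X → X} {x₀ : X} {g : Y → Y} {y₀ : Y} {k : Z → Z} {z₀ : Z}
    {π : Y → Z} {h : X → Y} (hπ : IsCountingHom g y₀ k z₀ π) (hh : IsCountingHom f x₀ g y₀ h) :
    IsCountingHom f x₀ k z₀ (π ∘ h) := by
  refine ⟨(congrArg π hh.1).trans hπ.1, ?_⟩
  calc
    π ∘ h ∘ f = π ∘ g ∘ h := congrArg (π ∘ ·) hh.2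
    _ = k ∘ π ∘ h := congrArg (· ∘ h) hπ.2

theorem subtype_val {X : Type*} {f : X → X} {x₀ : X} {S : Set X} (hx₀ : x₀ ∈ S)
    (hS : MapsTo f S S) : IsCountingHom (hS.restrict f S S) ⟨x₀, hx₀⟩ f x₀ Subtype.val :=
  ⟨rfl, rfl⟩

theorem option_elim {X : Type*} (f : X → X) (x₀ : X) :
    IsCountingHom (fun o : Option X => some (o.elim x₀ f)) none f x₀ (fun o => o.elim x₀ f) :=
  ⟨rfl, rfl⟩

end IsCountingHom

namespace IsInitialCounting

variable {X : Type u} {f : X → X} {x₀ : X}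

theorem eq_id (hinit : IsInitialCounting f x₀) {k : X → X} (hk : IsCountingHom f x₀ f x₀ k) :
    k = id :=
  (hinit X f x₀).unique hk (.id f x₀)

theorem exists_leftInverse (hinit : IsInitialCounting f x₀) {Y : Type u} {g : Y → Y} {y₀ : Y}
    {π : Y → X} (hπ : IsCountingHom g y₀ f x₀ π) :
    ∃ h : X → Y, IsCountingHom f x₀ g y₀ h ∧ LeftInverse π h := by
  obtain ⟨h, hh, -⟩ := hinit Y g y₀
  exact ⟨h, hh, congrFun (hinit.eq_id (hπ.comp hh))⟩

theorem eq_univ_of_mapsTo (hinit : IsInitialCounting f x₀) {S : Set X} (hx₀ : x₀ ∈ S)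
    (hS : MapsTo f S S) : S = univ := by
  obtain ⟨h, -, val_h⟩ := hinit.exists_leftInverse (.subtype_val hx₀ hS)
  rw [← val_h.surjective.range_eq, Subtype.range_val]

theorem exists_predecessor (hinit : IsInitialCounting f x₀) :
    ∃ pred : X → Option X, pred x₀ = none ∧ ∀ x, pred (f x) = some x := by
  obtain ⟨pred, ⟨pred_zero, pred_comp⟩, elim_pred⟩ :=
    hinit.exists_leftInverse (.option_elim f x₀)
  refine ⟨pred, pred_zero, fun x => ?_⟩
  calc
    pred (f x) = some ((pred x).elim x₀ f) := congrFun pred_comp x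
    _ = some x := congrArg some (elim_pred x)

theorem injective (hinit : IsInitialCounting f x₀) : Injective f := by
  obtain ⟨pred, -, pred_succ⟩ := hinit.exists_predecessor
  have pred_comp : pred ∘ f = some := funext pred_succ
  exact .of_comp (pred_comp ▸ Option.some_injective X)

theorem notMem_range (hinit : IsInitialCounting f x₀) : x₀ ∉ range f := by
  obtain ⟨pred, pred_zero, pred_succ⟩ := hinit.exists_predecessor
  rintro ⟨x, rfl⟩
  exact Option.some_ne_none x ((pred_succ x).symm.trans pred_zero)

end IsInitialCounting

/-- (Lawvere) An initial counting system `(X, f, x₀)` — one admitting a unique morphism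
to every counting system `(Y, g, y₀)` — is a Dedekind system: it is minimal, `f` is
injective, and `x₀` is not in the range of `f`. -/
theorem initial_is_dedekind {X : Type u} (f : X → X) (x₀ : X)
    (hinit : ∀ (Y : Type u) (g : Y → Y) (y₀ : Y),
      ∃! h : X → Y, h x₀ = y₀ ∧ h ∘ f = g ∘ h) :
    (∀ S : Set X, x₀ ∈ S → (∀ x ∈ S, f x ∈ S) → S = Set.univ) ∧
      Function.Injective f ∧ x₀ ∉ Set.range f := by
  have initial : IsInitialCounting f x₀ := hinit
  exact ⟨fun _ hx₀ hS => initial.eq_univ_of_mapsTo hx₀ hS, initial.injective, initial.notMem_range⟩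
end

section
/- Let (X, f, x₀) be a minimal counting system with X a finite type. Then there exists a unique element z ∈ X such that (X, f, x₀) is z-minimal, i.e., such that the only subset Y ⊆ X containing x₀ with f(Y \ {z}) ⊆ Y is X itself. -/
/-!
By minimality every `x` is on the orbit of `x₀`, so it has a hitting time, the least `n` with
`f^[n] x₀ = x`. For any `z`, the points hit no later than `z` are exactly those reached from `x₀`
when `f` may not be applied at `z`. Hence the system is `z`-minimal if and only if `z` has maximal
hitting time. A maximiser exists since `X` is finite and nonempty, and is unique since hitting
times are injective.
-/

namespace CountingSystem

open Function Set

/-- The counting system `(X, f, x₀)` is minimal: no proper `f`-invariant subset contains `x₀`. -/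
def IsMinimal {X : Type*} (f : X → X) (x₀ : X) : Prop :=
  ∀ S : Set X, x₀ ∈ S → MapsTo f S S → S = univ

/-- The counting system `(X, f, x₀)` is `z`-minimal: no proper subset containing `x₀` is closed
under `f` applied away from `z`. -/
def IsEndpoint {X : Type*} (f : X → X) (x₀ z : X) : Prop :=
  ∀ Y : Set X, x₀ ∈ Y → MapsTo f (Y \ {z}) Y → Y = univ

/-- The first time at which the orbit of `x₀` under `f` visits `x`, with the junk value `0` when it
never does. -/
noncomputable def hittingTime {X : Type*} (f : X → X) (x₀ x : X) : ℕ :=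
  sInf {n | f^[n] x₀ = x}

variable {X : Type*} {f : X → X} {x₀ x z : X}

lemma hittingTime_iterate_le (f : X → X) (x₀ : X) (n : ℕ) :
    hittingTime f x₀ (f^[n] x₀) ≤ n :=
  Nat.sInf_le rfl

lemma iterate_hittingTime (hx : ∃ n, f^[n] x₀ = x) : f^[hittingTime f x₀ x] x₀ = x :=
  Nat.sInf_mem hx

lemma hittingTime_apply_le (hx : ∃ n, f^[n] x₀ = x) :
    hittingTime f x₀ (f x) ≤ hittingTime f x₀ x + 1 := by
  simpa only [iterate_succ_apply', iterate_hittingTime hx] using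
    hittingTime_iterate_le f x₀ (hittingTime f x₀ x + 1)

lemma iterate_mem_of_le_hittingTime {Y : Set X} (hx₀ : x₀ ∈ Y) (hY : MapsTo f (Y \ {z}) Y)
    {n : ℕ} (hn : n ≤ hittingTime f x₀ z) : f^[n] x₀ ∈ Y := by
  induction n with
  | zero => exact hx₀
  | succ n ih =>
    have hne : f^[n] x₀ ≠ z := by
      rintro rfl
      exact (hittingTime_iterate_le f x₀ n).not_gt hn
    rw [iterate_succ_apply']
    exact hY ⟨ih (Nat.le_of_succ_le hn), hne⟩

lemma IsMinimal.exists_iterate_eq (h : IsMinimal f x₀) (x : X) : ∃ n, f^[n] x₀ = x := by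
  have horbit : MapsTo f (range fun n ↦ f^[n] x₀) (range fun n ↦ f^[n] x₀) := by
    rintro _ ⟨n, rfl⟩
    exact ⟨n + 1, iterate_succ_apply' f n x₀⟩
  exact eq_univ_iff_forall.mp (h _ (mem_range_self 0) horbit) x

lemma IsMinimal.hittingTime_injective (h : IsMinimal f x₀) : Injective (hittingTime f x₀) :=
  LeftInverse.injective (g := fun n ↦ f^[n] x₀) fun x ↦ iterate_hittingTime (h.exists_iterate_eq x)

lemma IsMinimal.mapsTo_hittingTime_le (h : IsMinimal f x₀) (z : X) :
    MapsTo f ({x | hittingTime f x₀ x ≤ hittingTime f x₀ z} \ {z})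
      {x | hittingTime f x₀ x ≤ hittingTime f x₀ z} := by
  rintro x ⟨hle, hne⟩
  have hlt : hittingTime f x₀ x < hittingTime f x₀ z :=
    lt_of_le_of_ne hle (h.hittingTime_injective.ne hne)
  exact (hittingTime_apply_le (h.exists_iterate_eq x)).trans hlt

lemma IsMinimal.isEndpoint_iff (h : IsMinimal f x₀) :
    IsEndpoint f x₀ z ↔ ∀ x, hittingTime f x₀ x ≤ hittingTime f x₀ z := by
  constructor
  · intro hz
    have hx₀ : hittingTime f x₀ x₀ ≤ hittingTime f x₀ z :=
      (hittingTime_iterate_le f x₀ 0).trans (Nat.zero_le _)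
    exact eq_univ_iff_forall.mp (hz _ hx₀ (h.mapsTo_hittingTime_le z))
  · intro hmax Y hx₀ hY
    refine eq_univ_of_forall fun x ↦ ?_
    rw [← iterate_hittingTime (h.exists_iterate_eq x)]
    exact iterate_mem_of_le_hittingTime hx₀ hY (hmax x)

end CountingSystem

/-- A minimal counting system `(X, f, x₀)` with `X` a finite type admits a unique
element `z` such that `(X, f, x₀)` is `z`-minimal: the only subset `Y ⊆ X` containing
`x₀` with `f (Y \ {z}) ⊆ Y` is `X` itself. -/
theorem existsUnique_endpoint {X : Type*} [Finite X] (f : X → X) (x₀ : X)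
    (hmin : ∀ S : Set X, x₀ ∈ S → (∀ x ∈ S, f x ∈ S) → S = Set.univ) :
    ∃! z : X, ∀ Y : Set X, x₀ ∈ Y →
      (∀ x ∈ Y \ ({z} : Set X), f x ∈ Y) → Y = Set.univ := by
  have h : CountingSystem.IsMinimal f x₀ := hmin
  change ∃! z, CountingSystem.IsEndpoint f x₀ z
  simp only [h.isEndpoint_iff]
  have : Nonempty X := ⟨x₀⟩
  obtain ⟨z, hz⟩ := Finite.exists_max (CountingSystem.hittingTime f x₀)
  exact ⟨z, hz, fun w hw ↦ h.hittingTime_injective (le_antisymm (hz w) (hw z))⟩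
end

section
/- Let (X, f, x₀) be a minimal counting system with X a finite type, and let z be the end-point of (X, f, x₀) (the unique element such that (X, f, x₀) is z-minimal). Then f maps X \ {z} bijectively onto X \ {x₀}: the restriction of f to the complement of {z} is injective, and its image is exactly the complement of {x₀}. -/
/-! By `z`-minimality, `{x₀} ∪ f(X \ {z})` is all of `X`, so `f` maps `X \ {z}` onto at least
`X \ {x₀}`. The two complements have the same finite number of elements, which leaves room neither
for a collision nor for the value `x₀`. -/

open Set

/-- The counting system `(X, f, x₀)` is minimal when `f` need not be followed on `Z`: a set
containing `x₀` and closed under `f` outside `Z` is everything. Minimality is the case `Z = ∅`,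
and `z`-minimality is the case `Z = {z}`. -/
def IsMinimalOff {X : Type*} (f : X → X) (x₀ : X) (Z : Set X) : Prop :=
  ∀ Y : Set X, x₀ ∈ Y → (∀ x ∈ Y \ Z, f x ∈ Y) → Y = univ

theorem IsMinimalOff.surjOn {X : Type*} {f : X → X} {x₀ : X} {Z : Set X}
    (h : IsMinimalOff f x₀ Z) : SurjOn f Zᶜ {x₀}ᶜ := by
  have insert_image_eq : insert x₀ (f '' Zᶜ) = univ :=
    h _ (mem_insert _ _) fun x hx => mem_insert_of_mem _ (mem_image_of_mem f hx.2)
  intro y hy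
  exact mem_of_mem_insert_of_ne (insert_image_eq ▸ mem_univ y) hy

theorem bijOn_of_surjOn_of_ncard_le {α β : Type*} {f : α → β} {s : Set α} {t : Set β}
    (hs : s.Finite) (hf : SurjOn f s t) (hst : s.ncard ≤ t.ncard) : BijOn f s t := by
  have image_eq : t = f '' s :=
    eq_of_subset_of_ncard_le hf ((ncard_image_le hs).trans hst) (hs.image f)
  have card_image : (f '' s).ncard = s.ncard :=
    (ncard_image_le hs).antisymm (image_eq ▸ hst)
  exact image_eq ▸ (injOn_of_ncard_image_eq card_image hs).bijOn_image

/-- Let `(X, f, x₀)` be a minimal counting system with `X` finite and end-point `z`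
(the unique element for which `(X, f, x₀)` is `z`-minimal). Then `f` maps `X \ {z}`
bijectively onto `X \ {x₀}`. -/
theorem endpoint_maps_bijectively {X : Type*} [Finite X] (f : X → X) (x₀ : X)
    (hmin : ∀ S : Set X, x₀ ∈ S → (∀ x ∈ S, f x ∈ S) → S = Set.univ)
    (z : X)
    (hz : ∀ Y : Set X, x₀ ∈ Y →
      (∀ x ∈ Y \ ({z} : Set X), f x ∈ Y) → Y = Set.univ) :
    Set.InjOn f ({z}ᶜ : Set X) ∧ f '' ({z}ᶜ : Set X) = ({x₀}ᶜ : Set X) := by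
  have surjOn : SurjOn f {z}ᶜ {x₀}ᶜ := IsMinimalOff.surjOn hz
  have card_eq : ({z}ᶜ : Set X).ncard = ({x₀}ᶜ : Set X).ncard := by
    rw [ncard_compl, ncard_compl, ncard_singleton, ncard_singleton]
  have bijOn : BijOn f {z}ᶜ {x₀}ᶜ := bijOn_of_surjOn_of_ncard_le (toFinite _) surjOn card_eq.le
  exact ⟨bijOn.injOn, bijOn.image_eq⟩
end

section
/- Let (X, f, x₀) be a minimal counting system, α an infinite type, # the unique iterator for (X, f, x₀) on α, and ⊕ the unique binary operation on X satisfying (a0) x ⊕ x₀ = x and (a1) x ⊕ f(x') = f(x ⊕ x'). Then there exists a unique binary operation ⊗ on X satisfying (m0) x ⊗ x₀ = x₀ for all x ∈ X and (m1) x ⊗ f(x') = x ⊕ (x ⊗ x') for all x, x' ∈ X. This operation is associative and commutative, satisfies x ⊗ f(x₀) = x for all x ∈ X (so f(x₀) is a multiplicative unit), satisfies the distributive law x ⊗ (x₁ ⊕ x₂) = (x ⊗ x₁) ⊕ (x ⊗ x₂) for all x, x₁, x₂ ∈ X, and satisfies #(A) ⊗ #(B) = #(C) whenever A, B, C : Finset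 α are such that there is a bijection between C and the cartesian product A × B. -/
/-!
By minimality every element of `X` is a numeral `f^[n] x₀`. The recursion for `⊕` reads
`x ⊕ f^[n] x₀ = f^[n] x`, so the recursion for `⊗` forces `f^[m] x₀ ⊗ f^[n] x₀ = f^[m * n] x₀`.
This is well defined: all iterates of `f` commute, so an equality `f^[n] x₀ = f^[n'] x₀` propagates
from `x₀` to `f^[n] = f^[n']`, whence `f^[m * n] = (f^[n])^[m] = (f^[n'])^[m] = f^[m * n']`.
The algebraic laws descend from `ℕ`, and an iterator sends `A` to the numeral of its cardinality.
-/

/-- Minimality of the counting system `(X, f, x₀)`: the only `f`-invariant set containing `x₀` is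
`X` itself. -/
def IsMinimalCounting {X : Type*} (f : X → X) (x₀ : X) : Prop :=
  ∀ S : Set X, x₀ ∈ S → (∀ x ∈ S, f x ∈ S) → S = Set.univ

/-- `it` is an iterator for the counting system `(X, f, x₀)` on `α`: it counts the elements of a
finite set inside `X`. -/
def IsCountingIterator {X α : Type*} [DecidableEq α] (f : X → X) (x₀ : X) (it : Finset α → X) :
    Prop :=
  it ∅ = x₀ ∧ ∀ (A : Finset α) (a : α), a ∉ A → it (insert a A) = f (it A)

/-- `add` is an addition on the counting system `(X, f, x₀)`: it satisfies the recursion (a0), (a1)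
in its second argument. -/
def IsCountingAdd {X : Type*} (f : X → X) (x₀ : X) (add : X → X → X) : Prop :=
  (∀ x : X, add x x₀ = x) ∧ ∀ x x' : X, add x (f x') = f (add x x')

/-- `mul` is a multiplication on the counting system `(X, f, x₀)` with respect to `add`: it
satisfies the recursion (m0), (m1) in its second argument. -/
def IsCountingMul {X : Type*} (f : X → X) (x₀ : X) (add mul : X → X → X) : Prop :=
  (∀ x : X, mul x x₀ = x₀) ∧ ∀ x x' : X, mul x (f x') = add x (mul x x')

section

variable {X : Type*} {f : X → X} {x₀ : X} {add mul : X → X → X}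

theorem IsMinimalCounting.exists_iterate_eq (hmin : IsMinimalCounting f x₀) (x : X) :
    ∃ n : ℕ, f^[n] x₀ = x := by
  have hrange : Set.range (fun n : ℕ => f^[n] x₀) = Set.univ := by
    refine hmin _ ⟨0, rfl⟩ ?_
    rintro _ ⟨n, rfl⟩
    exact ⟨n + 1, Function.iterate_succ_apply' f n x₀⟩
  exact Set.range_eq_univ.mp hrange x

theorem IsMinimalCounting.iterate_eq_iterate (hmin : IsMinimalCounting f x₀) {m n : ℕ}
    (h : f^[m] x₀ = f^[n] x₀) : f^[m] = f^[n] := by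
  funext x
  obtain ⟨k, rfl⟩ := hmin.exists_iterate_eq x
  calc f^[m] (f^[k] x₀) = f^[k] (f^[m] x₀) := Function.Commute.iterate_iterate_self f m k x₀
    _ = f^[k] (f^[n] x₀) := by rw [h]
    _ = f^[n] (f^[k] x₀) := Function.Commute.iterate_iterate_self f k n x₀

theorem IsMinimalCounting.iterate_mul_eq (hmin : IsMinimalCounting f x₀) (k : ℕ) {m n : ℕ}
    (h : f^[m] x₀ = f^[n] x₀) : f^[k * m] = f^[k * n] := by
  rw [Nat.mul_comm k m, Nat.mul_comm k n, Function.iterate_mul, Function.iterate_mul,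
    hmin.iterate_eq_iterate h]

theorem IsCountingIterator.apply_eq_iterate_card {α : Type*} [DecidableEq α] {it : Finset α → X}
    (hit : IsCountingIterator f x₀ it) (A : Finset α) : it A = f^[A.card] x₀ := by
  induction A using Finset.induction_on with
  | empty => exact hit.1
  | insert a A ha ih =>
    rw [hit.2 A a ha, Finset.card_insert_of_notMem ha, Function.iterate_succ_apply', ih]

theorem IsCountingAdd.apply_iterate (hadd : IsCountingAdd f x₀ add) (x : X) (n : ℕ) :
    add x (f^[n] x₀) = f^[n] x := by
  have hcomm : Function.Semiconj (add x) f f := hadd.2 x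
  rw [(hcomm.iterate_right n).eq, hadd.1]

theorem IsCountingAdd.apply_iterate_iterate (hadd : IsCountingAdd f x₀ add) (m n : ℕ) :
    add (f^[m] x₀) (f^[n] x₀) = f^[m + n] x₀ := by
  rw [hadd.apply_iterate, Nat.add_comm, Function.iterate_add_apply]

theorem IsCountingMul.apply_iterate_iterate (hadd : IsCountingAdd f x₀ add)
    (hmul : IsCountingMul f x₀ add mul) (m n : ℕ) :
    mul (f^[m] x₀) (f^[n] x₀) = f^[m * n] x₀ := by
  induction n with
  | zero => exact hmul.1 _
  | succ n ih =>
    rw [Function.iterate_succ_apply', hmul.2, ih, hadd.apply_iterate_iterate, Nat.mul_succ,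
      Nat.add_comm]

theorem IsMinimalCounting.exists_isCountingMul (hmin : IsMinimalCounting f x₀)
    (hadd : IsCountingAdd f x₀ add) : ∃ mul : X → X → X, IsCountingMul f x₀ add mul := by
  choose index iterate_index using hmin.exists_iterate_eq
  refine ⟨fun x y => f^[index x * index y] x₀, fun x => ?_, fun x y => ?_⟩
  · have hzero : f^[index x₀] x₀ = f^[0] x₀ := iterate_index x₀
    exact congrFun (hmin.iterate_mul_eq (index x) hzero) x₀
  · have hsucc : f^[index (f y)] x₀ = f^[index y + 1] x₀ := by
      rw [iterate_index, Function.iterate_succ_apply', iterate_index]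
    calc f^[index x * index (f y)] x₀
        = f^[index x * (index y + 1)] x₀ := by rw [hmin.iterate_mul_eq (index x) hsucc]
      _ = f^[index x * index y] (f^[index x] x₀) := by
          rw [Nat.mul_succ, Function.iterate_add_apply]
      _ = add x (f^[index x * index y] x₀) := by rw [iterate_index, hadd.apply_iterate]

theorem IsCountingMul.unique {mul' : X → X → X} (hmin : IsMinimalCounting f x₀)
    (hadd : IsCountingAdd f x₀ add) (hmul : IsCountingMul f x₀ add mul)
    (hmul' : IsCountingMul f x₀ add mul') : mul = mul' := by
  funext x y
  obtain ⟨m, rfl⟩ := hmin.exists_iterate_eq x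
  obtain ⟨n, rfl⟩ := hmin.exists_iterate_eq y
  rw [hmul.apply_iterate_iterate hadd, hmul'.apply_iterate_iterate hadd]

theorem IsCountingMul.assoc (hmin : IsMinimalCounting f x₀) (hadd : IsCountingAdd f x₀ add)
    (hmul : IsCountingMul f x₀ add mul) (x y z : X) : mul (mul x y) z = mul x (mul y z) := by
  obtain ⟨k, rfl⟩ := hmin.exists_iterate_eq x
  obtain ⟨m, rfl⟩ := hmin.exists_iterate_eq y
  obtain ⟨n, rfl⟩ := hmin.exists_iterate_eq z
  simp only [hmul.apply_iterate_iterate hadd, Nat.mul_assoc]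

theorem IsCountingMul.comm (hmin : IsMinimalCounting f x₀) (hadd : IsCountingAdd f x₀ add)
    (hmul : IsCountingMul f x₀ add mul) (x y : X) : mul x y = mul y x := by
  obtain ⟨m, rfl⟩ := hmin.exists_iterate_eq x
  obtain ⟨n, rfl⟩ := hmin.exists_iterate_eq y
  rw [hmul.apply_iterate_iterate hadd, hmul.apply_iterate_iterate hadd, Nat.mul_comm]

theorem IsCountingMul.mul_one (hadd : IsCountingAdd f x₀ add) (hmul : IsCountingMul f x₀ add mul)
    (x : X) : mul x (f x₀) = x := by
  rw [hmul.2, hmul.1, hadd.1]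

theorem IsCountingMul.mul_add (hmin : IsMinimalCounting f x₀) (hadd : IsCountingAdd f x₀ add)
    (hmul : IsCountingMul f x₀ add mul) (x x₁ x₂ : X) :
    mul x (add x₁ x₂) = add (mul x x₁) (mul x x₂) := by
  obtain ⟨k, rfl⟩ := hmin.exists_iterate_eq x
  obtain ⟨m, rfl⟩ := hmin.exists_iterate_eq x₁
  obtain ⟨n, rfl⟩ := hmin.exists_iterate_eq x₂
  simp only [hmul.apply_iterate_iterate hadd, hadd.apply_iterate_iterate, Nat.mul_add]

variable {α β γ : Type*} [DecidableEq α] [DecidableEq β] [DecidableEq γ]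
  {itα : Finset α → X} {itβ : Finset β → X} {itγ : Finset γ → X}

theorem IsCountingMul.iterator_mul_iterator (hadd : IsCountingAdd f x₀ add)
    (hmul : IsCountingMul f x₀ add mul) (hα : IsCountingIterator f x₀ itα)
    (hβ : IsCountingIterator f x₀ itβ) (hγ : IsCountingIterator f x₀ itγ)
    {A : Finset α} {B : Finset β} {C : Finset γ} (e : C ≃ (A ×ˢ B : Finset (α × β))) :
    mul (itα A) (itβ B) = itγ C := by
  have hcard : C.card = A.card * B.card :=
    (Finset.card_eq_of_equiv e).trans (Finset.card_product A B)
  rw [hα.apply_eq_iterate_card, hβ.apply_eq_iterate_card, hγ.apply_eq_iterate_card,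
    hmul.apply_iterate_iterate hadd, hcard]

theorem minimal_multiplication_general (hmin : IsMinimalCounting f x₀)
    (hα : IsCountingIterator f x₀ itα) (hβ : IsCountingIterator f x₀ itβ)
    (hγ : IsCountingIterator f x₀ itγ) (hadd : IsCountingAdd f x₀ add) :
    (∃! mul : X → X → X, IsCountingMul f x₀ add mul) ∧
      ∀ mul : X → X → X, IsCountingMul f x₀ add mul →
        (∀ x y z : X, mul (mul x y) z = mul x (mul y z)) ∧
        (∀ x y : X, mul x y = mul y x) ∧
        (∀ x : X, mul x (f x₀) = x) ∧
        (∀ x x₁ x₂ : X, mul x (add x₁ x₂) = add (mul x x₁) (mul x x₂)) ∧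
        (∀ (A : Finset α) (B : Finset β) (C : Finset γ),
          Nonempty (C ≃ (A ×ˢ B : Finset (α × β))) → mul (itα A) (itβ B) = itγ C) := by
  refine ⟨existsUnique_of_exists_of_unique (hmin.exists_isCountingMul hadd)
    fun _ _ hmul hmul' => hmul.unique hmin hadd hmul', fun mul hmul => ?_⟩
  exact ⟨hmul.assoc hmin hadd, hmul.comm hmin hadd, hmul.mul_one hadd, hmul.mul_add hmin hadd,
    fun _ _ _ ⟨e⟩ => hmul.iterator_mul_iterator hadd hα hβ hγ e⟩

end

/-- Multiplication for a minimal counting system `(X, f, x₀)` with unique iterator `it`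
on an infinite type `α`, where `add` is the unique addition (satisfying (a0) and (a1)):
there is a unique binary operation `⊗` with `x ⊗ x₀ = x₀` and
`x ⊗ f x' = x ⊕ (x ⊗ x')`; it is associative, commutative, has `f x₀` as a unit,
distributes over `⊕`, and satisfies `it A ⊗ it B = it C` whenever `C` is in bijection
with the cartesian product `A ×ˢ B`. -/
theorem minimal_multiplication {X : Type*} (f : X → X) (x₀ : X)
    (hmin : ∀ S : Set X, x₀ ∈ S → (∀ x ∈ S, f x ∈ S) → S = Set.univ)
    {α : Type*} [DecidableEq α] [Infinite α] (it : Finset α → X)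
    (h0 : it ∅ = x₀)
    (h1 : ∀ (A : Finset α) (a : α), a ∉ A → it (insert a A) = f (it A))
    (add : X → X → X)
    (ha0 : ∀ x : X, add x x₀ = x)
    (ha1 : ∀ x x' : X, add x (f x') = f (add x x')) :
    (∃! mul : X → X → X,
      (∀ x : X, mul x x₀ = x₀) ∧
      (∀ x x' : X, mul x (f x') = add x (mul x x'))) ∧
      ∀ mul : X → X → X,
        ((∀ x : X, mul x x₀ = x₀) ∧
          (∀ x x' : X, mul x (f x') = add x (mul x x'))) →
        (∀ x y zz : X, mul (mul x y) zz = mul x (mul y zz)) ∧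
        (∀ x y : X, mul x y = mul y x) ∧
        (∀ x : X, mul x (f x₀) = x) ∧
        (∀ x x₁ x₂ : X, mul x (add x₁ x₂) = add (mul x x₁) (mul x x₂)) ∧
        (∀ (A B : Finset α) (C : Finset α),
          Nonempty (C ≃ (A ×ˢ B : Finset (α × α))) → mul (it A) (it B) = it C) :=
  minimal_multiplication_general hmin ⟨h0, h1⟩ ⟨h0, h1⟩ ⟨h0, h1⟩ ⟨ha0, ha1⟩
end
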